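/- For all nonnegative integers p, q, the polynomial N_{pq}(t) satisfies N_{pq}(t) = Σ_{k=1}^{min(p,q)} S⊖(k, p−k | k, q−k) · t^k; equivalently, for every k ≥ 1 the coefficient of t^k in N_{pq}(t) equals S⊖(k, p−k | k, q−k) when 1 ≤ k ≤ min(p,q) and equals 0 otherwise, and the coefficient of t^0 is 0. (Theorem 3.1, the main combinatorial interpretation.) -/

import Mathlib

open Finset

open scoped Classical in
/-- `Par a b` is the set of Young diagrams (lower sets of boxes) fitting inside an
`a × b` rectangle, encoded as finsets of cells `(i, j)` with `i < a` and `j < b`. -/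
noncomputable def Par (a b : ℕ) : Finset (Finset (ℕ × ℕ)) :=
  ((Finset.range a ×ˢ Finset.range b).powerset).filter
    (fun S => IsLowerSet (S : Set (ℕ × ℕ)))

/-- `Sdiff a b c d` is the sum of `|λ ⊖ μ|` over all `λ ∈ Par(a×b)` and `μ ∈ Par(c×d)`. -/
noncomputable def Sdiff (a b c d : ℕ) : ℕ :=
  ∑ l ∈ Par a b, ∑ m ∈ Par c d, (symmDiff l m).card

/-- The polynomial `W_{pq}(t) = Σ_{k=0}^{min(p,q)-1} C(p-1,k) C(q-1,k) t^k`. -/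
noncomputable def W (p q : ℕ) : Polynomial ℤ :=
  ∑ k ∈ Finset.range (min p q),
    Polynomial.C (((p - 1).choose k : ℤ) * ((q - 1).choose k : ℤ)) * Polynomial.X ^ k

/-!
A Young diagram with at most `k + 1` rows and at most `b + 1` columns either misses the cell
`(0, b)`, and then has at most `b` columns, or its first row is full, and then it is a full row of
length `b + 1` on top of a diagram with at most `k` rows. For the diagrams of the `k × (p - k)`
rectangle this is Pascal's rule in `(p, k)`. Applying it to both diagrams of a pair gives an
inclusion-exclusion formula for sums over pairs, whose last term runs over pairs with both first
rows full; there the symmetric difference gains `|(p - k) - (q - k)| = |p - q|` cells, for each of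
the `C(p, k) C(q, k)` pairs. This is the defining recursion of `N`, coefficient by coefficient.
-/

/-- The cell set whose row `0` is `r` and whose rows from `1` on are the rows of `l`, moved down by
one. It serves to split off the first row of a diagram. -/
def prependRow (r : Finset ℕ) (l : Finset (ℕ × ℕ)) : Finset (ℕ × ℕ) :=
  l.image (Prod.map Nat.succ id) ∪ {0} ×ˢ r

section PrependRow

variable {r : Finset ℕ} {l : Finset (ℕ × ℕ)} {i j : ℕ}

@[simp]
lemma zero_mk_mem_prependRow : (0, j) ∈ prependRow r l ↔ j ∈ r := by
  simp [prependRow]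

@[simp]
lemma succ_mk_mem_prependRow : (i + 1, j) ∈ prependRow r l ↔ (i, j) ∈ l := by
  simp [prependRow]

lemma prependRow_injective (r : Finset ℕ) : Function.Injective (prependRow r) := by
  intro l m h
  ext ⟨i, j⟩
  rw [← succ_mk_mem_prependRow (r := r), h, succ_mk_mem_prependRow]

lemma exists_eq_prependRow (S : Finset (ℕ × ℕ)) : ∃ r l, S = prependRow r l := by
  have shift_injective : Function.Injective (Prod.map Nat.succ (id : ℕ → ℕ)) :=
    Nat.succ_injective.prodMap Function.injective_id
  refine ⟨S.preimage (Prod.mk 0) (Prod.mk_right_injective 0).injOn,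
    S.preimage (Prod.map Nat.succ id) shift_injective.injOn, ?_⟩
  ext ⟨_ | i, j⟩ <;> simp

lemma card_prependRow (r : Finset ℕ) (l : Finset (ℕ × ℕ)) :
    (prependRow r l).card = l.card + r.card := by
  have rows_disjoint : Disjoint (l.image (Prod.map Nat.succ id)) ({0} ×ˢ r) := by
    rw [disjoint_left]
    rintro ⟨_ | i, j⟩ <;> simp
  rw [prependRow, card_union_of_disjoint rows_disjoint,
    card_image_of_injective _ (Nat.succ_injective.prodMap Function.injective_id),
    card_product, card_singleton, one_mul]

lemma symmDiff_prependRow (r s : Finset ℕ) (l m : Finset (ℕ × ℕ)) :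
    symmDiff (prependRow r l) (prependRow s m) = prependRow (symmDiff r s) (symmDiff l m) := by
  ext ⟨_ | i, j⟩ <;> simp [mem_symmDiff]

end PrependRow

lemma card_symmDiff_range (b c : ℕ) :
    ((symmDiff (range b) (range c)).card : ℤ) = |(b : ℤ) - c| := by
  have h : symmDiff (range b) (range c) = Ico (min b c) (max b c) := by
    ext j
    simp only [mem_symmDiff, mem_range, mem_Ico]
    omega
  rw [h, Nat.card_Ico, Nat.cast_sub min_le_max, Nat.cast_min, Nat.cast_max, max_sub_min_eq_abs,
    abs_sub_comm]

section Par

variable {a b : ℕ} {r : Finset ℕ} {l S : Finset (ℕ × ℕ)}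

lemma mem_Par : S ∈ Par a b ↔ S ⊆ range a ×ˢ range b ∧ IsLowerSet (S : Set (ℕ × ℕ)) := by
  classical rw [Par, mem_filter, mem_powerset]

lemma Par_eq_singleton_empty (h : a = 0 ∨ b = 0) : Par a b = {∅} := by
  ext S
  have rectangle_empty : range a ×ˢ range b = ∅ := by simpa using h
  rw [mem_Par, rectangle_empty, subset_empty, mem_singleton, and_iff_left_iff_imp]
  rintro rfl
  simpa using isLowerSet_empty

lemma prependRow_range_mem_Par :
    prependRow (range b) l ∈ Par (a + 1) b ↔ l ∈ Par a b := by
  simp only [mem_Par]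
  constructor
  · rintro ⟨hsub, hlower⟩
    constructor
    · rintro ⟨i, j⟩ hij
      simpa using hsub (succ_mk_mem_prependRow.2 hij)
    · rintro ⟨i, j⟩ ⟨i', j'⟩ ⟨hi, hj⟩ hij
      have hle : (i' + 1, j') ≤ (i + 1, j) := ⟨Nat.succ_le_succ hi, hj⟩
      exact succ_mk_mem_prependRow.1 (hlower hle (succ_mk_mem_prependRow.2 hij))
  · rintro ⟨hsub, hlower⟩
    have col_lt {i j : ℕ} (hij : (i, j) ∈ l) : j < b := by
      simpa using (mem_product.1 (hsub hij)).2
    constructor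
    · rintro ⟨_ | i, j⟩ hij
      · simpa using hij
      · simpa using hsub (succ_mk_mem_prependRow.1 hij)
    · rintro ⟨_ | i, j⟩ ⟨_ | i', j'⟩ ⟨hi, hj⟩ hij <;>
        simp only [mem_coe, zero_mk_mem_prependRow, succ_mk_mem_prependRow, mem_range] at hij ⊢
      · exact hj.trans_lt hij
      · simp at hi
      · exact hj.trans_lt (col_lt hij)
      · exact hlower (show (i', j') ≤ (i, j) from ⟨Nat.le_of_succ_le_succ hi, hj⟩) hij

lemma eq_range_succ_of_prependRow_mem_Par (h : prependRow r l ∈ Par (a + 1) (b + 1))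
    (hb : b ∈ r) : r = range (b + 1) := by
  obtain ⟨hsub, hlower⟩ := mem_Par.1 h
  ext j
  constructor
  · intro hj
    exact (mem_product.1 (hsub (zero_mk_mem_prependRow.2 hj))).2
  · intro hj
    have hle : (0, j) ≤ (0, b) := ⟨le_rfl, mem_range_succ_iff.1 hj⟩
    exact zero_mk_mem_prependRow.1 (hlower hle (zero_mk_mem_prependRow.2 hb))

lemma filter_corner_mem_Par (a b : ℕ) :
    {S ∈ Par (a + 1) (b + 1) | (0, b) ∈ S} =
      (Par a (b + 1)).image (prependRow (range (b + 1))) := by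
  ext S
  rw [mem_filter, mem_image]
  constructor
  · rintro ⟨hS, hcorner⟩
    obtain ⟨r, l, rfl⟩ := exists_eq_prependRow S
    obtain rfl := eq_range_succ_of_prependRow_mem_Par hS (zero_mk_mem_prependRow.1 hcorner)
    exact ⟨l, prependRow_range_mem_Par.1 hS, rfl⟩
  · rintro ⟨l, hl, rfl⟩
    exact ⟨prependRow_range_mem_Par.2 hl, by simp⟩

lemma filter_corner_notMem_Par (a b : ℕ) :
    {S ∈ Par (a + 1) (b + 1) | (0, b) ∉ S} = Par (a + 1) b := by
  ext S
  simp only [mem_filter, mem_Par]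
  constructor
  · rintro ⟨⟨hsub, hlower⟩, hcorner⟩
    refine ⟨fun ⟨i, j⟩ hij ↦ ?_, hlower⟩
    have hrect := hsub hij
    have hj : ¬ b ≤ j := fun hbj ↦
      hcorner (hlower (show (0, b) ≤ (i, j) from ⟨i.zero_le, hbj⟩) hij)
    simp only [mem_product, mem_range] at hrect ⊢
    exact ⟨hrect.1, not_le.1 hj⟩
  · rintro ⟨hsub, hlower⟩
    refine ⟨⟨hsub.trans (product_subset_product_right (range_subset_range.2 b.le_succ)), hlower⟩,
      fun hcorner ↦ ?_⟩
    simpa using hsub hcorner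

lemma sum_Par_succ_succ {M : Type*} [AddCommMonoid M] (a b : ℕ) (f : Finset (ℕ × ℕ) → M) :
    ∑ S ∈ Par (a + 1) (b + 1), f S =
      ∑ S ∈ Par (a + 1) b, f S + ∑ l ∈ Par a (b + 1), f (prependRow (range (b + 1)) l) := by
  rw [← sum_filter_not_add_sum_filter (Par (a + 1) (b + 1)) (fun S ↦ (0, b) ∈ S),
    filter_corner_notMem_Par, filter_corner_mem_Par, sum_image (prependRow_injective _).injOn]

end Par

/-- The Young diagrams of the `k × (p - k)` rectangle, which has semiperimeter `p`. There is no
such rectangle for `p < k`, and taking the empty family then makes Pascal's rule hold for all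
`k` and `p`. -/
noncomputable def diagrams (k p : ℕ) : Finset (Finset (ℕ × ℕ)) :=
  if k ≤ p then Par k (p - k) else ∅

section Diagrams

variable {k p : ℕ}

lemma diagrams_of_le (h : k ≤ p) : diagrams k p = Par k (p - k) := if_pos h

lemma diagrams_of_lt (h : p < k) : diagrams k p = ∅ := if_neg h.not_ge

lemma diagrams_zero (p : ℕ) : diagrams 0 p = {∅} := by
  rw [diagrams_of_le p.zero_le, Par_eq_singleton_empty (Or.inl rfl)]

lemma diagrams_self (k : ℕ) : diagrams k k = {∅} := by
  rw [diagrams_of_le le_rfl, Par_eq_singleton_empty (Or.inr (Nat.sub_self k))]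

lemma sum_diagrams_succ_succ {M : Type*} [AddCommMonoid M] (k p : ℕ)
    (f : Finset (ℕ × ℕ) → M) :
    ∑ l ∈ diagrams (k + 1) (p + 1), f l =
      ∑ l ∈ diagrams (k + 1) p, f l +
        ∑ l ∈ diagrams k p, f (prependRow (range (p - k)) l) := by
  rcases lt_trichotomy k p with h | rfl | h
  · obtain ⟨b, rfl⟩ : ∃ b, p = k + 1 + b := Nat.exists_eq_add_of_le h
    rw [diagrams_of_le (by omega), diagrams_of_le (by omega), diagrams_of_le (by omega),
      show k + 1 + b + 1 - (k + 1) = b + 1 by omega, show k + 1 + b - (k + 1) = b by omega,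
      show k + 1 + b - k = b + 1 by omega, sum_Par_succ_succ]
  · simp [diagrams_self, diagrams_of_lt, prependRow]
  · simp [diagrams_of_lt, h, h.trans (Nat.lt_succ_self k)]

lemma card_diagrams (k p : ℕ) : (diagrams k p).card = p.choose k := by
  induction p generalizing k with
  | zero =>
    cases k with
    | zero => simp [diagrams_zero]
    | succ k => simp [diagrams_of_lt]
  | succ p ih =>
    cases k with
    | zero => simp [diagrams_zero]
    | succ k =>
      rw [card_eq_sum_ones, sum_diagrams_succ_succ, ← card_eq_sum_ones, ← card_eq_sum_ones, ih, ih,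
        Nat.choose_succ_succ', add_comm]

lemma sum_sum_diagrams_succ_succ {M : Type*} [AddCommGroup M] (k p q : ℕ)
    (f : Finset (ℕ × ℕ) → Finset (ℕ × ℕ) → M) :
    ∑ l ∈ diagrams (k + 1) (p + 1), ∑ m ∈ diagrams (k + 1) (q + 1), f l m =
      ∑ l ∈ diagrams (k + 1) p, ∑ m ∈ diagrams (k + 1) (q + 1), f l m +
      ∑ l ∈ diagrams (k + 1) (p + 1), ∑ m ∈ diagrams (k + 1) q, f l m -
      ∑ l ∈ diagrams (k + 1) p, ∑ m ∈ diagrams (k + 1) q, f l m +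
      ∑ l ∈ diagrams k p, ∑ m ∈ diagrams k q,
        f (prependRow (range (p - k)) l) (prependRow (range (q - k)) m) := by
  simp only [sum_diagrams_succ_succ, sum_add_distrib]
  abel

end Diagrams

/-- `S⊖(k, p - k | k, q - k)`, with value `0` when `p < k` or `q < k`. -/
noncomputable def sdiffSum (k p q : ℕ) : ℤ :=
  ∑ l ∈ diagrams k p, ∑ m ∈ diagrams k q, ((symmDiff l m).card : ℤ)

section SdiffSum

variable {k p q : ℕ}

lemma sdiffSum_eq_Sdiff (hp : k ≤ p) (hq : k ≤ q) :
    sdiffSum k p q = Sdiff k (p - k) k (q - k) := by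
  simp only [sdiffSum, Sdiff, diagrams_of_le hp, diagrams_of_le hq, Nat.cast_sum]

lemma sdiffSum_eq_zero (h : min p q < k) : sdiffSum k p q = 0 := by
  rcases min_lt_iff.1 h with hp | hq
  · simp [sdiffSum, diagrams_of_lt hp]
  · simp [sdiffSum, diagrams_of_lt hq]

lemma sdiffSum_zero (p q : ℕ) : sdiffSum 0 p q = 0 := by
  simp [sdiffSum, diagrams_zero]

lemma sum_sum_card_symmDiff_prependRow (k p q : ℕ) :
    ∑ l ∈ diagrams k p, ∑ m ∈ diagrams k q,
      ((symmDiff (prependRow (range (p - k)) l) (prependRow (range (q - k)) m)).card : ℤ) =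
      sdiffSum k p q + |(p : ℤ) - q| * (p.choose k * q.choose k) := by
  rcases lt_or_ge (min p q) k with h | h
  · rw [sdiffSum_eq_zero h]
    rcases min_lt_iff.1 h with hp | hq
    · simp [diagrams_of_lt hp, Nat.choose_eq_zero_of_lt hp]
    · simp [diagrams_of_lt hq, Nat.choose_eq_zero_of_lt hq]
  · obtain ⟨hp, hq⟩ := le_min_iff.1 h
    have row_difference : ((p - k : ℕ) : ℤ) - (q - k : ℕ) = p - q := by omega
    simp only [symmDiff_prependRow, card_prependRow, Nat.cast_add, card_symmDiff_range,
      row_difference, sum_add_distrib, sum_const, card_diagrams, nsmul_eq_mul, sdiffSum]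
    ring

lemma sdiffSum_succ_succ_succ (k p q : ℕ) :
    sdiffSum (k + 1) (p + 1) (q + 1) =
      sdiffSum (k + 1) p (q + 1) + sdiffSum (k + 1) (p + 1) q - sdiffSum (k + 1) p q +
        sdiffSum k p q + |(p : ℤ) - q| * (p.choose k * q.choose k) := by
  rw [add_assoc _ (sdiffSum k p q), ← sum_sum_card_symmDiff_prependRow]
  exact sum_sum_diagrams_succ_succ k p q _

end SdiffSum

section Polynomials

open Polynomial

lemma coeff_W_succ_succ (p q n : ℕ) :
    (W (p + 1) (q + 1)).coeff n = p.choose n * q.choose n := by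
  simp only [W, finsetSum_coeff, coeff_C_mul_X_pow, sum_ite_eq, mem_range, Nat.add_sub_cancel]
  rw [ite_eq_left_iff, not_lt, min_le_iff]
  rintro (hp | hq)
  · simp [Nat.choose_eq_zero_of_lt hp]
  · simp [Nat.choose_eq_zero_of_lt hq]

/-- The generating polynomial `Σ_{k=1}^{min(p,q)} S⊖(k, p-k | k, q-k) t^k` of the sums of sizes of
symmetric differences, which is to be identified with `N_{pq}(t)`. -/
noncomputable def sdiffPoly (p q : ℕ) : ℤ[X] :=
  ∑ k ∈ Icc 1 (min p q), C (Sdiff k (p - k) k (q - k) : ℤ) * X ^ k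

lemma sdiffPoly_zero_left (q : ℕ) : sdiffPoly 0 q = 0 := by
  simp [sdiffPoly]

lemma sdiffPoly_zero_right (p : ℕ) : sdiffPoly p 0 = 0 := by
  simp [sdiffPoly]

lemma coeff_sdiffPoly (p q k : ℕ) : (sdiffPoly p q).coeff k = sdiffSum k p q := by
  simp only [sdiffPoly, finsetSum_coeff, coeff_C_mul_X_pow, sum_ite_eq, mem_Icc]
  split_ifs with h
  · obtain ⟨hp, hq⟩ := le_min_iff.1 h.2
    exact (sdiffSum_eq_Sdiff hp hq).symm
  · rcases k.eq_zero_or_pos with rfl | hk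
    · exact (sdiffSum_zero p q).symm
    · exact (sdiffSum_eq_zero (not_le.1 fun hle ↦ h ⟨hk, hle⟩)).symm

lemma sdiffPoly_succ_succ (p q : ℕ) :
    sdiffPoly (p + 1) (q + 1) = sdiffPoly p (q + 1) + sdiffPoly (p + 1) q -
      (1 - X) * sdiffPoly p q + C |(p : ℤ) - q| * X * W (p + 1) (q + 1) := by
  ext n
  cases n with
  | zero => simp [coeff_sdiffPoly, sdiffSum_zero, mul_coeff_zero]
  | succ k =>
    simp only [sub_mul, one_mul, mul_assoc, coeff_add, coeff_sub, coeff_C_mul, coeff_X_mul,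
      coeff_sdiffPoly, coeff_W_succ_succ, sdiffSum_succ_succ_succ]
    ring

end Polynomials

/-- Theorem 3.1: if `N` satisfies the defining recursion and initial values of the
polynomials `N_{pq}(t)`, then `N_{pq}(t) = Σ_{k=1}^{min(p,q)} S⊖(k, p-k | k, q-k) t^k`. -/
theorem Npq_eq_sum_sdiff (N : ℕ → ℕ → Polynomial ℤ)
    (h0q : ∀ q, N 0 q = 0) (hp0 : ∀ p, N p 0 = 0) (h11 : N 1 1 = 0)
    (hrec : ∀ p q : ℕ, 1 ≤ p → 1 ≤ q → ¬(p = 1 ∧ q = 1) →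
      N p q = N (p - 1) q + N p (q - 1) - (1 - Polynomial.X) * N (p - 1) (q - 1)
        + Polynomial.C (|(p : ℤ) - (q : ℤ)|) * Polynomial.X * W p q) :
    ∀ p q : ℕ,
      N p q = ∑ k ∈ Finset.Icc 1 (min p q),
        Polynomial.C ((Sdiff k (p - k) k (q - k) : ℤ)) * Polynomial.X ^ k := by
  intro p q
  change N p q = sdiffPoly p q
  induction p generalizing q with
  | zero => rw [h0q, sdiffPoly_zero_left]
  | succ p ihp =>
    induction q with
    | zero => rw [hp0, sdiffPoly_zero_right]
    | succ q ihq =>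
      rw [sdiffPoly_succ_succ, ← ihp, ← ihp, ← ihq]
      by_cases h : p = 0 ∧ q = 0
      · obtain ⟨rfl, rfl⟩ := h
        simp [h0q, hp0, h11]
      · simpa using hrec (p + 1) (q + 1) p.succ_pos q.succ_pos (by simpa using h)
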